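/- arXiv:1103.1141 — 3 statements merged into one kernel-verified Lean document; each statement's English description precedes it below -/
import Mathlib

section
/- Let H be a complex Hilbert space and let A₀ and B₀ assign to each nonempty bounded open interval I ⊆ (0,∞) subsets A₀(I), B₀(I) of B(H). Assume: (locality) A₀(I) and A₀(J) commute elementwise whenever I, J are disjoint, and likewise for B₀; (forward locality) A₀(I₁) and B₀(I₂) commute elementwise whenever I₂ > I₁. Fix R > 0 and for each double cone (I₁, I₂) of 𝔥_R set 𝔄(I₁,I₂) := (B₀(I₁) ∪ A₀(R²·I₂⁻¹))″. If (I₁, I₂) and (I₁', I₂') are double cones of 𝔥_R such that u < u' for all u ∈ I₁, u' ∈ I₁' and v < v' for all v ∈ I₂, v' ∈ I₂' (i.e. the double cones are spacelike separated), then 𝔄(I₁,I₂) and 𝔄(I₁',I₂') commute elementwise. -/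
/-- Locality of the boundary QFT net `𝔄(I₁,I₂) = (B₀(I₁) ∪ A₀(R²·I₂⁻¹))''` on the
interior of the Lorentz hyperboloid `𝔥_R`.  Bounded open intervals `(a,b) ⊆ (0,∞)`
are encoded by their endpoints; `R²·(c,d)⁻¹ = (R²/d, R²/c)`; a double cone of `𝔥_R`
is a pair of intervals `((a,b),(c,d))` with `a·c > R²`; the double commutant is
`Set.centralizer ∘ Set.centralizer`. -/
theorem stmt_1 {H : Type*} [NormedAddCommGroup H] [InnerProductSpace ℂ H]
    (A₀ B₀ : ℝ → ℝ → Set (H →L[ℂ] H)) (R : ℝ) (hR : 0 < R)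
    -- locality of A₀ : algebras of disjoint intervals commute elementwise
    (hlocA : ∀ a b c d : ℝ, 0 < a → a < b → 0 < c → c < d → (b ≤ c ∨ d ≤ a) →
      ∀ x ∈ A₀ a b, ∀ y ∈ A₀ c d, x * y = y * x)
    -- locality of B₀
    (hlocB : ∀ a b c d : ℝ, 0 < a → a < b → 0 < c → c < d → (b ≤ c ∨ d ≤ a) →
      ∀ x ∈ B₀ a b, ∀ y ∈ B₀ c d, x * y = y * x)
    -- forward locality : A₀(I₁) commutes with B₀(I₂) whenever I₂ > I₁
    (hfwd : ∀ a b c d : ℝ, 0 < a → a < b → 0 < c → c < d → b ≤ c →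
      ∀ x ∈ A₀ a b, ∀ y ∈ B₀ c d, x * y = y * x)
    -- two spacelike separated double cones ((a,b),(c,d)) and ((a',b'),(c',d')) of 𝔥_R
    (a b c d a' b' c' d' : ℝ)
    (ha : 0 < a) (hab : a < b) (hc : 0 < c) (hcd : c < d) (hdc : R ^ 2 < a * c)
    (ha' : 0 < a') (hab' : a' < b') (hc' : 0 < c') (hcd' : c' < d') (hdc' : R ^ 2 < a' * c')
    (hsp₁ : b ≤ a') (hsp₂ : d ≤ c') :
    ∀ x ∈ Set.centralizer (Set.centralizer (B₀ a b ∪ A₀ (R ^ 2 / d) (R ^ 2 / c))),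
    ∀ y ∈ Set.centralizer (Set.centralizer (B₀ a' b' ∪ A₀ (R ^ 2 / d') (R ^ 2 / c'))),
      x * y = y * x := by
  have hR2 : 0 < R ^ 2 := by positivity
  have hd : 0 < d := hc.trans hcd
  have hd' : 0 < d' := hc'.trans hcd'
  have e1 : 0 < R ^ 2 / d := by positivity
  have e2 : R ^ 2 / d < R ^ 2 / c := div_lt_div_of_pos_left hR2 hc hcd
  have e1' : 0 < R ^ 2 / d' := by positivity
  have e2' : R ^ 2 / d' < R ^ 2 / c' := div_lt_div_of_pos_left hR2 hc' hcd'
  have e3 : R ^ 2 / c' ≤ R ^ 2 / d := div_le_div_of_nonneg_left hR2.le hd hsp₂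
  have e4 : R ^ 2 / c < a := (div_lt_iff₀ hc).2 hdc
  -- the generating sets commute elementwise
  have key : ∀ s ∈ B₀ a b ∪ A₀ (R ^ 2 / d) (R ^ 2 / c),
      ∀ t ∈ B₀ a' b' ∪ A₀ (R ^ 2 / d') (R ^ 2 / c'), s * t = t * s := by
    rintro s (hs | hs) t (ht | ht)
    · exact hlocB a b a' b' ha hab ha' hab' (Or.inl hsp₁) s hs t ht
    · exact (hfwd _ _ a b e1' e2' ha hab (by linarith) t ht s hs).symm
    · exact hfwd _ _ a' b' e1 e2 ha' hab' (by linarith) s hs t ht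
    · exact hlocA _ _ _ _ e1 e2 e1' e2' (Or.inr e3) s hs t ht
  intro x hx y hy
  have hy' : y ∈ Set.centralizer (B₀ a b ∪ A₀ (R ^ 2 / d) (R ^ 2 / c)) := fun s hs =>
    hy s (fun t ht => (key s hs t ht).symm)
  exact (hx y hy').symm
end

section
/- Let H be a complex Hilbert space and let A, B, C assign to each interval I of ℝ subsets A(I), B(I), C(I) of B(H). Assume: (isotony of C) C(I) ⊆ C(I') whenever I ⊆ I'; (extension) A(I) ⊆ C(I) and B(I) ⊆ C(I) for all I; (forward locality of C w.r.t. A) A(J) commutes elementwise with C(K) whenever K > J; (backward locality of C w.r.t. B) B(I) commutes elementwise with C(K) whenever K < I. For a half-space double cone (I, J) with sup J < inf I define the induced algebra C₊(I,J) := C((sup J, inf I))′ ∩ C((inf J, sup I))″. Then: (i) B(I) ∪ A(J) ⊆ C₊(I,J); (ii) if (I', J') is another half-space double cone with sup J' < inf I', I > I' and J' > J (spacelike separation), then C₊(I,J) and C₊(I',J') commute elementwise. (Locality of the induced net on the half-space.) -/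
/-- Locality of the induced net on the half-space: with `C` an isotonous net on
intervals of `ℝ` extending `A` and `B`, forwardly local w.r.t. `A` and backwardly
local w.r.t. `B`, and
`C₊(I,J) := C((sup J, inf I))′ ∩ C((inf J, sup I))″` for a half-space double cone
`(I,J)` with `sup J < inf I`, one has (i) `B(I) ∪ A(J) ⊆ C₊(I,J)` and (ii) for
spacelike separated double cones the induced algebras commute elementwise.
Intervals `(a,b)` of `ℝ` are encoded by endpoints `a < b`. -/
theorem stmt_7 {H : Type*} [NormedAddCommGroup H] [InnerProductSpace ℂ H]
    (A B C : ℝ → ℝ → Set (H →L[ℂ] H))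
    -- isotony of C
    (hisoC : ∀ a b a' b' : ℝ, a < b → a' < b' → a' ≤ a → b ≤ b' → C a b ⊆ C a' b')
    -- C extends A and B
    (hAC : ∀ a b : ℝ, a < b → A a b ⊆ C a b)
    (hBC : ∀ a b : ℝ, a < b → B a b ⊆ C a b)
    -- forward locality of C w.r.t. A : A(J) commutes with C(K) whenever K > J
    (hfwd : ∀ a b k1 k2 : ℝ, a < b → k1 < k2 → b ≤ k1 →
      ∀ x ∈ A a b, ∀ y ∈ C k1 k2, x * y = y * x)
    -- backward locality of C w.r.t. B : B(I) commutes with C(K) whenever K < I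
    (hbwd : ∀ a b k1 k2 : ℝ, a < b → k1 < k2 → k2 ≤ a →
      ∀ x ∈ B a b, ∀ y ∈ C k1 k2, x * y = y * x) :
    -- (i)
    (∀ i1 i2 j1 j2 : ℝ, i1 < i2 → j1 < j2 → j2 < i1 →
      B i1 i2 ∪ A j1 j2 ⊆
        Set.centralizer (C j2 i1) ∩ Set.centralizer (Set.centralizer (C j1 i2))) ∧
    -- (ii)
    (∀ i1 i2 j1 j2 i1' i2' j1' j2' : ℝ,
      i1 < i2 → j1 < j2 → j2 < i1 → i1' < i2' → j1' < j2' → j2' < i1' →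
      i2' ≤ i1 → j2 ≤ j1' →
      ∀ x ∈ Set.centralizer (C j2 i1) ∩ Set.centralizer (Set.centralizer (C j1 i2)),
      ∀ y ∈ Set.centralizer (C j2' i1') ∩ Set.centralizer (Set.centralizer (C j1' i2')),
        x * y = y * x) := by
  refine ⟨?_, ?_⟩
  · intro i1 i2 j1 j2 hI hJ hJI x hx
    rcases hx with hx | hx
    · refine ⟨fun m hm => (hbwd i1 i2 j2 i1 hI hJI le_rfl x hx m hm).symm, ?_⟩
      have hxC : x ∈ C j1 i2 :=
        hisoC i1 i2 j1 i2 hI (by linarith) (by linarith) le_rfl (hBC i1 i2 hI hx)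
      exact fun m hm => (hm x hxC).symm
    · refine ⟨fun m hm => (hfwd j1 j2 j2 i1 hJ hJI le_rfl x hx m hm).symm, ?_⟩
      have hxC : x ∈ C j1 i2 :=
        hisoC j1 j2 j1 i2 hJ (by linarith) le_rfl (by linarith) (hAC j1 j2 hJ hx)
      exact fun m hm => (hm x hxC).symm
  · intro i1 i2 j1 j2 i1' i2' j1' j2' hI hJ hJI hI' hJ' hJI' hII hJJ x hx y hy
    have hsub : C j1' i2' ⊆ C j2 i1 :=
      hisoC j1' i2' j2 i1 (by linarith) hJI hJJ hII
    exact hy.2 x (fun m hm => hx.1 m (hsub hm))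
end

section
/- Let H be a complex Hilbert space, H₀ ⊆ H a closed real-linear subspace, and T, D : ℝ → B(H) families of unitary operators with: T(s + t) = T(s)·T(t) for all s, t; T(t)·H₀ ⊆ H₀ for all t ≥ 0; D(s)·H₀ = H₀ for all s ∈ ℝ; D(s)·T(t)·D(s)⁻¹ = T(e^{2πs}·t) for all s, t ∈ ℝ; and H₀ equals the topological closure of ⋃_{a > 0} T(a)·H₀. Let V be a unitary on H commuting with D(s) for every s ∈ ℝ and satisfying V·(T(1)·H₀) ⊆ T(1)·H₀. Then V·H₀ ⊆ H₀. (A unitary commuting with the modular group of H₀ that maps H₁ = T(1)H₀ into itself also maps H₀ into itself.) -/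
/-- A unitary `V` commuting with the modular-type group `D` of `H₀` which maps
`H₁ = T(1)·H₀` into itself also maps `H₀` into itself, provided `H₀` is the closed
union of the `T(a)·H₀`, `a > 0`. -/
theorem stmt_18 {H : Type*} [NormedAddCommGroup H] [InnerProductSpace ℂ H] [CompleteSpace H]
    (H₀ : Submodule ℝ H) (hcl : IsClosed (H₀ : Set H))
    (T D : ℝ → (H →L[ℂ] H))
    (hTu : ∀ t : ℝ, T t ∈ unitary (H →L[ℂ] H))
    (hDu : ∀ s : ℝ, D s ∈ unitary (H →L[ℂ] H))
    (hTgrp : ∀ s t : ℝ, T (s + t) = T s * T t)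
    (hTH : ∀ t : ℝ, 0 ≤ t → (T t) '' (H₀ : Set H) ⊆ (H₀ : Set H))
    (hDH : ∀ s : ℝ, (D s) '' (H₀ : Set H) = (H₀ : Set H))
    (hcomm : ∀ s t : ℝ, D s * T t * star (D s) = T (Real.exp (2 * Real.pi * s) * t))
    (hgen : (H₀ : Set H) = closure (⋃ a ∈ Set.Ioi (0 : ℝ), (T a) '' (H₀ : Set H)))
    (V : H →L[ℂ] H) (hVu : V ∈ unitary (H →L[ℂ] H))
    (hVD : ∀ s : ℝ, V * D s = D s * V)
    (hV1 : V '' ((T 1) '' (H₀ : Set H)) ⊆ (T 1) '' (H₀ : Set H)) :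
    V '' (H₀ : Set H) ⊆ (H₀ : Set H) := by
  have key : ∀ a : ℝ, 0 < a → ∀ x ∈ H₀, V (T a x) ∈ H₀ := by
    intro a ha x hx
    have hs : Real.exp (2 * Real.pi * (Real.log a / (2 * Real.pi))) * 1 = a := by
      have hpi : (2 * Real.pi) ≠ 0 := by positivity
      rw [mul_div_cancel₀ _ hpi, Real.exp_log ha, mul_one]
    generalize Real.log a / (2 * Real.pi) = s at hs
    have hx' : x ∈ (D s) '' (H₀ : Set H) := by rw [hDH s]; exact hx
    obtain ⟨y, hy, rfl⟩ := hx'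
    have h1 : T a * D s = D s * T 1 := by
      have h := hcomm s 1
      rw [hs] at h
      rw [← h, mul_assoc, Unitary.star_mul_self_of_mem (hDu s), mul_one]
    have h2 : T a (D s y) = D s (T 1 y) := DFunLike.congr_fun h1 y
    have h3 : V (D s (T 1 y)) = D s (V (T 1 y)) := DFunLike.congr_fun (hVD s) (T 1 y)
    rw [h2, h3]
    obtain ⟨z, hz, hze⟩ := hV1 ⟨T 1 y, ⟨y, hy, rfl⟩, rfl⟩
    have h4 : T 1 z ∈ (H₀ : Set H) := hTH 1 zero_le_one ⟨z, hz, rfl⟩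
    rw [hze] at h4
    have h5 : D s (V (T 1 y)) ∈ (H₀ : Set H) := by
      rw [← hDH s]; exact ⟨_, h4, rfl⟩
    exact h5
  have hsub : closure (⋃ a ∈ Set.Ioi (0 : ℝ), (T a) '' (H₀ : Set H)) ⊆ V ⁻¹' (H₀ : Set H) := by
    apply closure_minimal _ (hcl.preimage V.continuous)
    intro w hw
    simp only [Set.mem_iUnion] at hw
    obtain ⟨a, ha, x, hx, rfl⟩ := hw
    exact key a ha x hx
  rw [← hgen] at hsub
  exact Set.image_subset_iff.mpr hsub
end
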